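/- Fix a positive integer p, positive integers a < b, set c = a/b ∈ (0,1), and fix an integer N ≥ 0. For a positive integer t set n = a·t and m = b·t. Then there exist a constant C > 0 and a positive integer T such that for all integers t ≥ T (in particular p < n(m−n+1), so that μ0(p,n,m) > 0), |ln μ0(p,n,m) − Σ_{q=0}^N A_{p,q}(c)/n^{2q}| ≤ C·n^{−2(N+1)}. -/

import Mathlib

open Finset
open Finset

/-- Exact `p`-th moment of the GLRT statistic under `H₀`. -/
noncomputable def mu0 (p n m : ℕ) : ℝ :=
  Real.Gamma ((m : ℝ) * n) / ((n : ℝ) ^ p * Real.Gamma ((m : ℝ) * n - p)) *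
    ∏ j ∈ Finset.range n,
      Real.Gamma ((m : ℝ) - n + 1 - p / n + j) / Real.Gamma ((m : ℝ) - n + 1 + j)

/-- Rising factorial `(a)_r = a (a+1) ⋯ (a+r-1)` as a real number. -/
noncomputable def risingFactorial (a : ℕ) (r : ℕ) : ℝ :=
  ∏ i ∈ Finset.range r, ((a : ℝ) + i)

/-- Coefficients `A_{p,q}(c)` of the asymptotic expansion of `ln μ0`. -/
noncomputable def Acoef (p : ℕ) (c : ℝ) : ℕ → ℝ
  | 0 => p - p * (1 - 1 / c) * Real.log (1 - c)
  | 1 => -((p : ℝ) ^ 2 / 2) * Real.log (1 - c)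
          + c * p * (12 - 11 * c + 6 * (1 - (p : ℝ)) * (c - 1)) / (12 * (c - 1))
  | (q + 2) =>
      (c * p) ^ (q + 2) * (c + 12 * p - 12 * c * p - c * ((q + 2 : ℕ) : ℝ) ^ 2)
          / (12 * c * ((q + 2 : ℕ) : ℝ) * (((q + 2 : ℕ) : ℝ) ^ 2 - 1) * (1 - c) ^ (q + 2))
        + (c * p) ^ (q + 2) * (-12 * p + c * (((q + 2 : ℕ) : ℝ) ^ 2 - 1))
          / (12 * c * ((q + 2 : ℕ) : ℝ) * (((q + 2 : ℕ) : ℝ) ^ 2 - 1))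
        - (c ^ (q + 2) / ((q + 2 : ℕ) : ℝ)) * ∑ j ∈ Finset.Icc 1 p, (j : ℝ) ^ (q + 2)
        + ∑ j ∈ Finset.Icc 1 (q + 1),
            (bernoulli (2 * j + 2) : ℝ) * c ^ (2 * j) * risingFactorial (2 * j) (q + 2 - j)
              * (p * c) ^ (q + 2 - j)
              / (4 * j * (j + 1) * (Nat.factorial (q + 2 - j)))
              * (1 - (1 - c) ^ (-(j : ℤ) - (q + 2 : ℤ)))

/-- Coefficients `β_{p,j}(c)` of the asymptotic expansion of `μ0`. -/
noncomputable def bcoef (p : ℕ) (c : ℝ) (j : ℕ) : ℝ :=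
  Real.exp (Acoef p c 0) *
    ∑ i ∈ Finset.univ.filter
        (fun i : Fin j → Fin (j + 1) => ∑ r : Fin j, (r.1 + 1) * (i r).1 = j),
      ∏ r : Fin j, (Acoef p c (r.1 + 1)) ^ (i r).1 / (Nat.factorial (i r).1)

/-!
As a function of its argument, `log Γ` is up to a constant the backward difference of
`Λ z = ∑ a_k logTower (2 k) z`, where `X² / (e^X + e^{-X} - 2) = ∑ a_k X^{2k}` inverts the second
central difference formally. Truncating `Λ` after order `K` leaves a remainder which changes by
`O(z ^ (-2 K - 2))` under `z ↦ z + 1`; hence it is `O(z ^ (-2 K - 1))` plus a constant along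
`z + ℕ`, and Gauss' limit formula for `Γ` shows that this constant is the same for all `z`.

The product of Gamma ratios in `mu0` therefore telescopes: with `x = p / n` its logarithm is
`(Λ (m - x) - Λ m) - (Λ (m - n - x) - Λ (m - n))` up to a negligible error. Expanding in `x` and
sorting by powers of `n`, together with the expansion of `log Γ (m n) - log Γ (m n - p)` in powers
of `1 / (m n)`, gives the coefficients `Acoef`. All errors are uniform as long as `n / (m - n)`
stays bounded.
-/

open Filter Topology

section Taylor

variable {E : Type*} [NormedAddCommGroup E] [NormedSpace ℝ E]
  {f : ℕ → ℝ → E} {s : Set ℝ} {M z h k : ℝ}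

theorem norm_sub_taylor_sum_le_of_hasDerivWithinAt (hs : s.OrdConnected) {y : ℝ} (hz : z ∈ s)
    (hy : y ∈ s) (R : ℕ) (hf : ∀ r < R, ∀ w ∈ s, HasDerivWithinAt (f r) (f (r + 1) w) s w)
    (hM : ∀ w ∈ s, ‖f R w‖ ≤ M) :
    ‖f 0 y - ∑ r ∈ range R, ((y - z) ^ r / (r.factorial : ℝ)) • f r z‖ ≤ M * |y - z| ^ R := by
  induction R generalizing f y with
  | zero => simpa using hM y hy
  | succ R ih =>
    have hM0 : 0 ≤ M := (norm_nonneg _).trans (hM z hz)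
    have hsub : Set.uIcc z y ⊆ s := hs.uIcc_subset hz hy
    have hmonomial (r : ℕ) (w : ℝ) :
        HasDerivAt (fun w => (w - z) ^ (r + 1) / ((r + 1).factorial : ℝ))
          ((w - z) ^ r / (r.factorial : ℝ)) w := by
      refine ((((hasDerivAt_id w).sub_const z).pow (r + 1)).div_const _).congr_deriv ?_
      rw [Nat.factorial_succ]
      push_cast
      field_simp
      simp
    have hderiv : ∀ w ∈ Set.uIcc z y, HasDerivWithinAt
        (fun w => f 0 w - ∑ r ∈ range (R + 1), ((w - z) ^ r / (r.factorial : ℝ)) • f r z)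
        (f 1 w - ∑ r ∈ range R, ((w - z) ^ r / (r.factorial : ℝ)) • f (r + 1) z)
        (Set.uIcc z y) w := by
      intro w hw
      refine ((hf 0 R.succ_pos w (hsub hw)).mono hsub).sub (HasDerivAt.hasDerivWithinAt ?_)
      simp only [sum_range_succ', pow_zero]
      exact (HasDerivAt.fun_sum fun r _ => (hmonomial r w).smul_const (f (r + 1) z)).add_const _
    have hbound : ∀ w ∈ Set.uIcc z y,
        ‖f 1 w - ∑ r ∈ range R, ((w - z) ^ r / (r.factorial : ℝ)) • f (r + 1) z‖
          ≤ M * |y - z| ^ R := fun w hw =>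
      calc _ ≤ M * |w - z| ^ R :=
            ih (f := fun r => f (r + 1)) (hsub hw) (fun r hr => hf (r + 1) (by lia)) hM
        _ ≤ M * |y - z| ^ R := by
            gcongr M * ?_ ^ R
            exact Set.abs_sub_left_of_mem_uIcc hw
    have := (convex_uIcc z y).norm_image_sub_le_of_norm_hasDerivWithin_le hderiv hbound
      Set.left_mem_uIcc Set.right_mem_uIcc
    rw [sum_range_succ' _ R] at this
    simpa [sum_range_succ', pow_succ, mul_assoc] using this

theorem sum_range_two_mul {A : Type*} [AddCommMonoid A] (u : ℕ → A) (n : ℕ) :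
    ∑ i ∈ range (2 * n), u i = ∑ k ∈ range n, (u (2 * k) + u (2 * k + 1)) := by
  induction n with
  | zero => simp
  | succ n ih => rw [mul_add_one, sum_range_succ, sum_range_succ, ih, sum_range_succ, add_assoc]

theorem norm_central_diff_sub_sum_le (hs : s.OrdConnected) (hz : z ∈ s) (hadd : z + h ∈ s)
    (hsub : z - h ∈ s) (L : ℕ)
    (hf : ∀ r < 2 * (L + 1), ∀ w ∈ s, HasDerivWithinAt (f r) (f (r + 1) w) s w)
    (hM : ∀ w ∈ s, ‖f (2 * (L + 1)) w‖ ≤ M) :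
    ‖f 0 (z + h) + f 0 (z - h) - (2 : ℝ) • f 0 z - ∑ l ∈ range L,
        (2 * h ^ (2 * (l + 1)) / ((2 * (l + 1)).factorial : ℝ)) • f (2 * (l + 1)) z‖
      ≤ 2 * M * |h| ^ (2 * (L + 1)) := by
  have hp := norm_sub_taylor_sum_le_of_hasDerivWithinAt hs hz hadd _ hf hM
  have hn := norm_sub_taylor_sum_le_of_hasDerivWithinAt hs hz hsub _ hf hM
  rw [add_sub_cancel_left] at hp
  rw [show z - h - z = -h by ring, abs_neg] at hn
  calc _ = ‖(f 0 (z + h) - ∑ r ∈ range (2 * (L + 1)), (h ^ r / (r.factorial : ℝ)) • f r z) +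
        (f 0 (z - h) - ∑ r ∈ range (2 * (L + 1)), ((-h) ^ r / (r.factorial : ℝ)) • f r z)‖ := ?_
    _ ≤ 2 * M * |h| ^ (2 * (L + 1)) := by linarith [norm_add_le_of_le hp hn]
  congr 1
  rw [sub_add_sub_comm, ← sum_add_distrib, sum_range_two_mul, sum_range_succ', sub_sub,
    add_comm ((2 : ℝ) • f 0 z)]
  congr 2
  · refine sum_congr rfl fun l _ => ?_
    rw [neg_pow h, neg_pow h, Even.neg_one_pow (by simp), Odd.neg_one_pow (by simp)]
    module
  · simp
    module

theorem norm_mixed_diff_sub_le (hs : s.OrdConnected) (hz : z ∈ s) (hh : z + h ∈ s) (hk : z + k ∈ s)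
    (hhk : z + h + k ∈ s) (hf : ∀ r < 3, ∀ w ∈ s, HasDerivWithinAt (f r) (f (r + 1) w) s w)
    (hM : ∀ w ∈ s, ‖f 3 w‖ ≤ M) :
    ‖f 0 (z + h + k) - f 0 (z + h) - f 0 (z + k) + f 0 z - (h * k) • f 2 z‖
      ≤ M * (|h + k| ^ 3 + |h| ^ 3 + |k| ^ 3) := by
  have h₁ := norm_sub_taylor_sum_le_of_hasDerivWithinAt hs hz hhk 3 hf hM
  have h₂ := norm_sub_taylor_sum_le_of_hasDerivWithinAt hs hz hh 3 hf hM
  have h₃ := norm_sub_taylor_sum_le_of_hasDerivWithinAt hs hz hk 3 hf hM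
  rw [show z + h + k - z = h + k by ring] at h₁
  rw [add_sub_cancel_left] at h₂ h₃
  rw [mul_add, mul_add]
  refine le_trans (le_of_eq ?_) (norm_sub_le_of_le (norm_sub_le_of_le h₁ h₂) h₃)
  congr 1
  norm_num [sum_range_succ, Nat.factorial]
  module

end Taylor

section LogTower

/-- The tower of derivatives through `log`: on `(0, ∞)`, `logTower 2 = log` and `logTower (i + 1)`
is the derivative of `logTower i`, so that `logTower 1` and `logTower 0` are iterated
antiderivatives of `log`. -/
noncomputable def logTower : ℕ → ℝ → ℝ
  | 0, z => z ^ 2 / 2 * Real.log z - 3 / 4 * z ^ 2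
  | 1, z => z * Real.log z - z
  | 2, z => Real.log z
  | (i + 3), z => (-1) ^ i * (i.factorial : ℝ) * (z ^ (i + 1))⁻¹

theorem hasDerivAt_logTower (i : ℕ) {z : ℝ} (hz : 0 < z) :
    HasDerivAt (logTower i) (logTower (i + 1) z) z := by
  match i with
  | 0 =>
    refine ((((hasDerivAt_pow 2 z).div_const 2).mul (Real.hasDerivAt_log hz.ne')).sub
      ((hasDerivAt_pow 2 z).const_mul (3 / 4))).congr_deriv ?_
    simp only [logTower]
    field_simp
    simp
    ring
  | 1 =>
    refine (((hasDerivAt_id z).mul (Real.hasDerivAt_log hz.ne')).sub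
      (hasDerivAt_id z)).congr_deriv ?_
    simp only [logTower, id]
    field_simp
    ring
  | 2 => exact (Real.hasDerivAt_log hz.ne').congr_deriv (by simp [logTower])
  | (i + 3) =>
    refine (((hasDerivAt_pow (i + 1) z).inv (by positivity)).const_mul
      ((-1) ^ i * (i.factorial : ℝ))).congr_deriv ?_
    simp only [logTower, Nat.factorial_succ]
    push_cast
    field_simp
    ring

theorem hasDerivWithinAt_logTower_Ici {z₀ : ℝ} (hz₀ : 0 < z₀) (i : ℕ) :
    ∀ w ∈ Set.Ici z₀, HasDerivWithinAt (logTower i) (logTower (i + 1) w) (Set.Ici z₀) w :=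
  fun _ hw => (hasDerivAt_logTower i (hz₀.trans_le hw)).hasDerivWithinAt

theorem abs_logTower_add_three_le (i : ℕ) {z₀ z : ℝ} (hz₀ : 0 < z₀) (hz : z₀ ≤ z) :
    |logTower (i + 3) z| ≤ (i.factorial : ℝ) / z₀ ^ (i + 1) := by
  have : 0 < z := hz₀.trans_le hz
  simp only [logTower, abs_mul, abs_pow, abs_neg, abs_one, one_pow, one_mul, abs_inv,
    abs_of_pos this, Nat.abs_cast, div_eq_mul_inv]
  gcongr

end LogTower

section CentralCoeff

/-- The even Taylor coefficients `a_k` in `X² / (e^X + e^{-X} - 2) = ∑ a_k X^{2k}`. As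
`e^∂ + e^{-∂} - 2` is the second central difference operator, `∑ a_k ∂^{2k}` turns a function into a
formal solution of the second-difference equation for its second derivative. -/
noncomputable def centralCoeff (k : ℕ) : ℝ :=
  (1 - 2 * (k : ℝ)) * (bernoulli (2 * k) : ℝ) / ((2 * k).factorial : ℝ)

theorem centralCoeff_zero : centralCoeff 0 = 1 := by simp [centralCoeff]

theorem centralCoeff_one : centralCoeff 1 = -1 / 12 := by
  simp [centralCoeff, bernoulli_two]
  norm_num

open PowerSeries

variable (A : Type*) [CommRing A] [Algebra ℚ A]

-- With `B = X / (e^X - 1)` one has `B - X B' = X² e^X / (e^X - 1)² = X² / (e^X + e^{-X} - 2)`.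
theorem bernoulliPowerSeries_sub_X_mul_derivative_mul :
    (bernoulliPowerSeries A - X * derivative A (bernoulliPowerSeries A)) *
      (exp A + evalNegHom (exp A) - 2) = X ^ 2 := by
  have hB := bernoulliPowerSeries_mul_exp_sub_one A
  have hB' := congrArg (derivative A) hB
  have hexp := exp_mul_exp_neg_eq_one (A := A)
  simp only [Derivation.leibniz, map_sub, derivative_exp A, Derivation.map_one_eq_zero,
    smul_eq_mul, derivative_X, sub_zero] at hB'
  set B := bernoulliPowerSeries A
  set e := exp A
  set e' := evalNegHom e
  linear_combination ((e - 1) * e' + X * e * e') * hB - X * (e - 1) * e' * hB' +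
    (X ^ 2 - (e - 2) * (B - X * derivative A B)) * hexp

theorem coeff_bernoulliPowerSeries_sub_X_mul_derivative (i : ℕ) :
    coeff i (bernoulliPowerSeries A - X * derivative A (bernoulliPowerSeries A)) =
      algebraMap ℚ A ((1 - i) * bernoulli i / i.factorial) := by
  rcases i with _ | i
  · simp [bernoulliPowerSeries]
  · rw [map_sub, coeff_succ_X_mul, coeff_derivative, bernoulliPowerSeries, coeff_mk,
      show (i : A) + 1 = algebraMap ℚ A (i + 1) by simp, ← map_mul, ← map_sub]
    congr 1
    push_cast
    ring

theorem coeff_exp_add_evalNegHom_exp_sub_two (i : ℕ) :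
    coeff i (exp A + evalNegHom (exp A) - 2) =
      algebraMap ℚ A ((1 + (-1) ^ i) / i.factorial) - if i = 0 then 2 else 0 := by
  rw [map_sub, map_add, evalNegHom, coeff_rescale, ← map_ofNat (C (R := A)) 2, coeff_C, coeff_exp]
  simp [div_eq_mul_inv, add_mul]

theorem sum_centralCoeff_mul (r : ℕ) :
    ∑ k ∈ range (r + 1), centralCoeff k * (2 / ((2 * (r + 1 - k)).factorial : ℝ)) =
      if r = 0 then 1 else 0 := by
  have hcoeff := congrArg (coeff (2 * (r + 1))) (bernoulliPowerSeries_sub_X_mul_derivative_mul ℝ)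
  have heven (k : ℕ) : coeff (2 * k) (bernoulliPowerSeries ℝ -
      X * derivative ℝ (bernoulliPowerSeries ℝ)) = centralCoeff k := by
    simp [coeff_bernoulliPowerSeries_sub_X_mul_derivative, centralCoeff]
  have hodd (k : ℕ) : coeff (2 * k + 1) (bernoulliPowerSeries ℝ -
      X * derivative ℝ (bernoulliPowerSeries ℝ)) = 0 := by
    rw [coeff_bernoulliPowerSeries_sub_X_mul_derivative]
    rcases k with _ | k
    · simp
    · rw [bernoulli_eq_zero_of_odd ⟨k + 1, rfl⟩ (by lia), mul_zero, zero_div, map_zero]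
  have hzero : coeff 0 (exp ℝ + evalNegHom (exp ℝ) - 2) = 0 := by
    rw [coeff_exp_add_evalNegHom_exp_sub_two]
    norm_num
  rw [coeff_mul, Finset.Nat.sum_antidiagonal_eq_sum_range_succ_mk, sum_range_succ,
    sum_range_two_mul, coeff_X_pow] at hcoeff
  simp only [hodd, heven, zero_mul, add_zero, Nat.sub_self, hzero, mul_zero,
    show 2 * (r + 1) = 2 ↔ r = 0 by lia] at hcoeff
  rw [← hcoeff]
  refine sum_congr rfl fun k hk => ?_
  have hk : k < r + 1 := mem_range.mp hk
  rw [coeff_exp_add_evalNegHom_exp_sub_two, if_neg (by lia), ← Nat.mul_sub,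
    Even.neg_one_pow (by simp)]
  norm_num

end CentralCoeff

section LogBarnes

/-- The truncation after `K + 1` terms of the formal solution `∑ a_k logTower (2 k)` of
`Λ (z + 1) - 2 Λ z + Λ (z - 1) = log z`. It is the asymptotic expansion, up to an affine function,
of `log G (z + 1)` with `G` the Barnes G-function. -/
noncomputable def logBarnes (K : ℕ) (z : ℝ) : ℝ :=
  ∑ k ∈ range (K + 1), centralCoeff k * logTower (2 * k) z

theorem sum_centralCoeff_mul_logTower (K : ℕ) (z : ℝ) :
    ∑ k ∈ range (K + 1), centralCoeff k * ∑ l ∈ range (K + 1 - k),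
      2 / ((2 * (l + 1)).factorial : ℝ) * logTower (2 * k + 2 * (l + 1)) z = Real.log z := by
  simp only [mul_sum]
  rw [← sum_range_diag_flip (K + 1) fun k l => centralCoeff k *
    (2 / ((2 * (l + 1)).factorial : ℝ) * logTower (2 * k + 2 * (l + 1)) z)]
  calc _ = ∑ r ∈ range (K + 1), logTower (2 * (r + 1)) z * if r = 0 then 1 else 0 := by
        refine sum_congr rfl fun r _ => ?_
        rw [← sum_centralCoeff_mul r, mul_sum]
        refine sum_congr rfl fun k hk => ?_
        have hk : k < r + 1 := mem_range.mp hk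
        rw [show 2 * k + 2 * (r - k + 1) = 2 * (r + 1) by lia, show r - k + 1 = r + 1 - k by lia]
        ring
    _ = Real.log z := by simp [logTower]

theorem exists_abs_logBarnes_central_diff_sub_log_le (K : ℕ) : ∃ C : ℝ, 0 ≤ C ∧ ∀ z : ℝ, 2 ≤ z →
    |logBarnes K (z + 1) + logBarnes K (z - 1) - 2 * logBarnes K z - Real.log z|
      ≤ C / z ^ (2 * K + 2) := by
  refine ⟨∑ k ∈ range (K + 1), |centralCoeff k| * (2 * ((2 * K + 1).factorial * 2 ^ (2 * K + 2))),
    by positivity, fun z hz => ?_⟩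
  have hz₀ : 0 < z / 2 := by linarith
  have hterm (k : ℕ) (hk : k < K + 1) :
      |logTower (2 * k) (z + 1) + logTower (2 * k) (z - 1) - 2 * logTower (2 * k) z -
        ∑ l ∈ range (K + 1 - k), 2 / ((2 * (l + 1)).factorial : ℝ) *
          logTower (2 * k + 2 * (l + 1)) z|
        ≤ 2 * ((2 * K + 1).factorial / (z / 2) ^ (2 * K + 2)) := by
    have := norm_central_diff_sub_sum_le (f := fun r => logTower (2 * k + r))
      (h := 1) (Set.ordConnected_Ici (a := z / 2)) (z := z) (by simp; linarith)
      (by simp; linarith) (by simp; linarith) (K + 1 - k)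
      (fun r _ => hasDerivWithinAt_logTower_Ici hz₀ (2 * k + r)) fun w hw => by
        rw [show 2 * k + 2 * (K + 1 - k + 1) = 2 * K + 1 + 3 by lia]
        exact abs_logTower_add_three_le (2 * K + 1) hz₀ hw
    simpa using this
  rw [← sum_centralCoeff_mul_logTower K z]
  simp only [logBarnes]
  rw [mul_sum, ← sum_add_distrib, ← sum_sub_distrib, ← sum_sub_distrib, sum_div]
  refine (abs_sum_le_sum_abs _ _).trans (sum_le_sum fun k hk => ?_)
  rw [show ∀ a b c d e : ℝ, a * b + a * c - 2 * (a * d) - a * e = a * (b + c - 2 * d - e) by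
    intros; ring, abs_mul, mul_div_assoc]
  gcongr
  refine (hterm k (mem_range.mp hk)).trans_eq ?_
  rw [div_pow]
  field_simp

theorem tendsto_logTower_add_three (i : ℕ) : Tendsto (logTower (i + 3)) atTop (𝓝 0) := by
  have := (tendsto_pow_neg_atTop (𝕜 := ℝ) i.succ_ne_zero).const_mul ((-1) ^ i * (i.factorial : ℝ))
  rw [mul_zero] at this
  refine this.congr' (.of_forall fun z => ?_)
  rw [logTower, zpow_neg, zpow_natCast]

theorem tendsto_logTower_mixed_diff (i : ℕ) {y : ℝ} (hy : 0 ≤ y) :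
    Tendsto (fun z => logTower i (z + 1 + y) - logTower i (z + 1) - logTower i (z + y) +
      logTower i z - y * logTower (i + 2) z) atTop (𝓝 0) := by
  have hzero := ((tendsto_logTower_add_three i).abs.mul_const (|1 + y| ^ 3 + |1| ^ 3 + |y| ^ 3))
  rw [abs_zero, zero_mul] at hzero
  refine squeeze_zero_norm' ((eventually_gt_atTop 0).mono fun z hz => ?_) hzero
  have := norm_mixed_diff_sub_le (f := fun r => logTower (i + r)) (M := |logTower (i + 3) z|)
    (h := 1) (k := y) (Set.ordConnected_Ici (a := z)) (z := z) (by simp) (by simp) (by simpa)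
    (by simp; linarith) (fun r _ => hasDerivWithinAt_logTower_Ici hz (i + r)) fun w hw =>
      (abs_logTower_add_three_le i hz hw).trans_eq
        (by simp [logTower, abs_of_pos hz, div_eq_mul_inv])
  simpa using this

theorem tendsto_logBarnes_mixed_diff (K : ℕ) {y : ℝ} (hy : 0 ≤ y) :
    Tendsto (fun z => logBarnes K (z + 1 + y) - logBarnes K (z + 1) - logBarnes K (z + y) +
      logBarnes K z - y * Real.log z) atTop (𝓝 0) := by
  have hmixed := tendsto_finsetSum (range (K + 1)) fun k _ =>
    (tendsto_logTower_mixed_diff (2 * k) hy).const_mul (centralCoeff k)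
  have htail := tendsto_finsetSum (range K) fun k _ =>
    (tendsto_logTower_add_three (2 * k + 1)).const_mul (y * centralCoeff (k + 1))
  have h := hmixed.add htail
  simp only [mul_zero, sum_const_zero, add_zero] at h
  refine h.congr fun z => ?_
  have hlog : ∑ k ∈ range (K + 1), centralCoeff k * (y * logTower (2 * k + 2) z) =
      ∑ k ∈ range K, y * centralCoeff (k + 1) * logTower (2 * k + 1 + 3) z + y * Real.log z := by
    rw [sum_range_succ', centralCoeff_zero, one_mul]
    exact congrArg (· + _) (sum_congr rfl fun k _ => by ring_nf)
  simp only [logBarnes, mul_sub, mul_add, sum_sub_distrib, sum_add_distrib, hlog]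
  ring

theorem sum_one_div_add_pow_le (s n : ℕ) {z : ℝ} (hz : 2 ≤ z) :
    ∑ k ∈ range n, 1 / (z + k) ^ (s + 2) ≤ 2 / z ^ (s + 1) := by
  have hstep (k : ℕ) : 1 / (z + k) ^ (s + 2) ≤
      1 / z ^ s * (1 / (z + k - 1) - 1 / (z + (k + 1 : ℕ) - 1)) := by
    have hpos : 0 < z + k - 1 := by linarith [k.cast_nonneg (α := ℝ)]
    calc 1 / (z + k) ^ (s + 2) ≤ 1 / (z ^ s * ((z + k - 1) * (z + k))) := by
          rw [pow_add, pow_two]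
          gcongr <;> linarith
      _ = _ := by
          push_cast
          rw [show z + ((k : ℝ) + 1) - 1 = z + k by ring]
          have : z + k ≠ 0 := by linarith
          field_simp
          ring
  calc _ ≤ ∑ k ∈ range n, 1 / z ^ s * (1 / (z + k - 1) - 1 / (z + (k + 1 : ℕ) - 1)) :=
        sum_le_sum fun k _ => hstep k
    _ = 1 / z ^ s * (1 / (z - 1) - 1 / (z + n - 1)) := by
        rw [← mul_sum, sum_range_sub' fun k : ℕ => 1 / (z + (k : ℝ) - 1), Nat.cast_zero, add_zero]
    _ ≤ 1 / z ^ s * (2 / z) := by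
        have : 0 ≤ 1 / (z + n - 1) := div_nonneg zero_le_one (by linarith [n.cast_nonneg (α := ℝ)])
        have : 1 / (z - 1) ≤ 2 / z := by
          rw [div_le_div_iff₀ (by linarith) (by linarith)]
          linarith
        gcongr
        linarith
    _ = 2 / z ^ (s + 1) := by
        rw [pow_succ]
        field_simp

end LogBarnes

section LogGamma

theorem logGamma_add_one {y : ℝ} (hy : 0 < y) :
    Real.log (Real.Gamma (y + 1)) = Real.log (Real.Gamma y) + Real.log y := by
  rw [Real.Gamma_add_one hy.ne', Real.log_mul hy.ne' (Real.Gamma_pos_of_pos hy).ne', add_comm]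

/-- The error in the expansion of `log Γ` by the backward difference of `logBarnes K`, up to an
additive constant. -/
noncomputable def logGammaRemainder (K : ℕ) (z : ℝ) : ℝ :=
  Real.log (Real.Gamma z) - (logBarnes K z - logBarnes K (z - 1))

theorem logGammaRemainder_add_one_sub (K : ℕ) {z : ℝ} (hz : 0 < z) :
    logGammaRemainder K (z + 1) - logGammaRemainder K z =
      -(logBarnes K (z + 1) + logBarnes K (z - 1) - 2 * logBarnes K z - Real.log z) := by
  rw [logGammaRemainder, logGammaRemainder, logGamma_add_one hz, add_sub_cancel_right]
  ring

theorem exists_abs_logGammaRemainder_add_nat_sub_le (K : ℕ) :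
    ∃ C : ℝ, 0 ≤ C ∧ ∀ z : ℝ, 2 ≤ z → ∀ n : ℕ,
      |logGammaRemainder K (z + n) - logGammaRemainder K z| ≤ C / z ^ (2 * K + 1) := by
  obtain ⟨C, hC₀, hC⟩ := exists_abs_logBarnes_central_diff_sub_log_le K
  refine ⟨C * 2, by positivity, fun z hz n => ?_⟩
  have hstep (k : ℕ) : |logGammaRemainder K (z + (k + 1 : ℕ)) - logGammaRemainder K (z + k)| ≤
      C * (1 / (z + k) ^ (2 * K + 2)) := by
    have hzk : 2 ≤ z + k := by linarith [k.cast_nonneg (α := ℝ)]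
    rw [Nat.cast_succ, ← add_assoc, logGammaRemainder_add_one_sub K (by linarith), abs_neg,
      mul_one_div]
    exact hC _ hzk
  calc |logGammaRemainder K (z + n) - logGammaRemainder K z|
      = |∑ k ∈ range n, (logGammaRemainder K (z + (k + 1 : ℕ)) - logGammaRemainder K (z + k))| := by
        rw [sum_range_sub fun k : ℕ => logGammaRemainder K (z + k), Nat.cast_zero, add_zero]
    _ ≤ ∑ k ∈ range n, C * (1 / (z + k) ^ (2 * K + 2)) :=
        (abs_sum_le_sum_abs _ _).trans (sum_le_sum fun k _ => hstep k)
    _ ≤ C * (2 / z ^ (2 * K + 1)) := by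
        rw [← mul_sum]
        gcongr
        exact sum_one_div_add_pow_le (2 * K) n hz
    _ = C * 2 / z ^ (2 * K + 1) := (mul_div_assoc ..).symm

theorem tendsto_logGamma_add_nat_sub {y : ℝ} (hy : 0 < y) :
    Tendsto (fun k : ℕ => Real.log (Real.Gamma (y + k + 1)) - Real.log (Real.Gamma (k + 1)) -
      y * Real.log k) atTop (𝓝 0) := by
  have h := (Real.BohrMollerup.tendsto_log_gamma hy).const_sub (Real.log (Real.Gamma y))
  rw [sub_self] at h
  refine h.congr fun k => ?_
  have hadd := Real.BohrMollerup.f_add_nat_eq (f := Real.log ∘ Real.Gamma)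
    (fun hx => logGamma_add_one hx) hy (k + 1)
  simp only [Function.comp_apply, Nat.cast_succ, ← add_assoc] at hadd
  rw [hadd, Real.Gamma_nat_eq_factorial, Real.BohrMollerup.logGammaSeq]
  ring

theorem tendsto_logGammaRemainder_add_nat_sub (K : ℕ) {y : ℝ} (hy : 0 < y) :
    Tendsto (fun k : ℕ => logGammaRemainder K (y + (k + 1 : ℕ)) - logGammaRemainder K (k + 1 : ℕ))
      atTop (𝓝 0) := by
  have h := (tendsto_logGamma_add_nat_sub hy).sub
    ((tendsto_logBarnes_mixed_diff K hy.le).comp tendsto_natCast_atTop_atTop)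
  rw [sub_zero] at h
  refine h.congr fun k => ?_
  simp only [logGammaRemainder, Function.comp_apply, Nat.cast_succ, add_sub_cancel_right]
  rw [show y + ((k : ℝ) + 1) - 1 = k + y by ring, show y + ((k : ℝ) + 1) = k + 1 + y by ring,
    show y + (k : ℝ) + 1 = k + 1 + y by ring]
  ring

theorem exists_abs_logGammaRemainder_sub_le (K : ℕ) :
    ∃ C : ℝ, 0 ≤ C ∧ ∀ y z : ℝ, 2 ≤ y → 2 ≤ z →
      |logGammaRemainder K y - logGammaRemainder K z|
        ≤ C / y ^ (2 * K + 1) + C / z ^ (2 * K + 1) := by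
  obtain ⟨C, hC₀, hC⟩ := exists_abs_logGammaRemainder_add_nat_sub_le K
  refine ⟨C, hC₀, fun y z hy hz => ?_⟩
  have hlim : Tendsto (fun k : ℕ => logGammaRemainder K (y + (k + 1 : ℕ)) -
      logGammaRemainder K (z + (k + 1 : ℕ))) atTop (𝓝 0) := by
    have := (tendsto_logGammaRemainder_add_nat_sub K (y := y) (by linarith)).sub
      (tendsto_logGammaRemainder_add_nat_sub K (y := z) (by linarith))
    simpa using this
  have hconst : Tendsto (fun _ : ℕ => |logGammaRemainder K y - logGammaRemainder K z|) atTop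
      (𝓝 |logGammaRemainder K y - logGammaRemainder K z|) := tendsto_const_nhds
  have hbound := (hlim.abs.const_add (C / y ^ (2 * K + 1))).add_const (C / z ^ (2 * K + 1))
  rw [abs_zero, add_zero] at hbound
  refine le_of_tendsto_of_tendsto' hconst hbound fun k => ?_
  have h₁ := hC y hy (k + 1)
  have h₂ := hC z hz (k + 1)
  rw [abs_sub_comm] at h₁
  grw [← h₁, ← h₂]
  refine le_trans (le_of_eq ?_) ((abs_add_le _ _).trans (add_le_add_left (abs_add_le _ _) _))
  congr 1
  ring

theorem exists_abs_sum_logGamma_sub_logGamma_sub_le (K : ℕ) :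
    ∃ C : ℝ, 0 ≤ C ∧ ∀ (n : ℕ) (z x : ℝ), 2 ≤ z → x ≤ 1 →
      |∑ j ∈ range n, (Real.log (Real.Gamma (z + 1 - x + j)) - Real.log (Real.Gamma (z + 1 + j))) -
        ((logBarnes K (z + n - x) - logBarnes K (z + n)) - (logBarnes K (z - x) - logBarnes K z))|
        ≤ C * n / z ^ (2 * K + 1) := by
  obtain ⟨C, hC₀, hC⟩ := exists_abs_logGammaRemainder_sub_le K
  refine ⟨C + C, by positivity, fun n z x hz hx => ?_⟩
  have htelescope : (logBarnes K (z + n - x) - logBarnes K (z + n)) -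
      (logBarnes K (z - x) - logBarnes K z) = ∑ j ∈ range n,
        ((logBarnes K (z + (j + 1 : ℕ) - x) - logBarnes K (z + (j + 1 : ℕ))) -
          (logBarnes K (z + j - x) - logBarnes K (z + j))) := by
    rw [sum_range_sub fun j : ℕ => logBarnes K (z + j - x) - logBarnes K (z + j), Nat.cast_zero,
      add_zero]
  rw [htelescope, ← sum_sub_distrib]
  calc _ ≤ ∑ j ∈ range n, (C + C) / z ^ (2 * K + 1) := by
        refine (abs_sum_le_sum_abs _ _).trans (sum_le_sum fun j _ => ?_)
        calc _ = |logGammaRemainder K (z + 1 - x + j) - logGammaRemainder K (z + 1 + j)| := by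
              rw [logGammaRemainder, logGammaRemainder, Nat.cast_succ,
                show z + (j + 1) - x = z + 1 - x + j by ring, show z + (j + 1) = z + 1 + j by ring,
                show z + j - x = z + 1 - x + j - 1 by ring, show z + j = z + 1 + j - 1 by ring]
              congr 1
              ring
          _ ≤ C / (z + 1 - x + j) ^ (2 * K + 1) + C / (z + 1 + j) ^ (2 * K + 1) :=
              hC _ _ (by linarith [j.cast_nonneg (α := ℝ)]) (by linarith [j.cast_nonneg (α := ℝ)])
          _ ≤ (C + C) / z ^ (2 * K + 1) := by
              rw [add_div]
              gcongr <;> linarith [j.cast_nonneg (α := ℝ)]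
    _ = (C + C) * n / z ^ (2 * K + 1) := by
        rw [sum_const, card_range, nsmul_eq_mul]
        ring

end LogGamma

section BarnesShift

/-- The part of the formal Taylor expansion of `∑ a_k logTower (2 k) (z - x)` in `x` that collects
the terms of order `n ^ (-2 q)`, up to logarithms, when `z` is of order `n` and `x` of
order `1 / n`. -/
noncomputable def barnesShiftTerm (q : ℕ) (z x : ℝ) : ℝ :=
  ∑ k ∈ range (q + 1), centralCoeff k *
    ((-x) ^ (q + 1 - k) / ((q + 1 - k).factorial : ℝ) * logTower (k + q + 1) z)

theorem sum_barnesShiftTerm (Q : ℕ) (z x : ℝ) :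
    ∑ q ∈ range Q, barnesShiftTerm q z x = ∑ k ∈ range (Q + 1), ∑ r ∈ range (Q - k),
      centralCoeff k * ((-x) ^ (r + 1) / ((r + 1).factorial : ℝ) *
        logTower (2 * k + (r + 1)) z) := by
  rw [sum_range_succ _ Q, Nat.sub_self, sum_range_zero, add_zero, ← sum_range_diag_flip Q
    fun k r => centralCoeff k * ((-x) ^ (r + 1) / ((r + 1).factorial : ℝ) *
      logTower (2 * k + (r + 1)) z)]
  refine sum_congr rfl fun q _ => sum_congr rfl fun k hk => ?_
  have hk : k < q + 1 := mem_range.mp hk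
  rw [show 2 * k + (q - k + 1) = k + q + 1 by lia, show q - k + 1 = q + 1 - k by lia]

theorem abs_logBarnes_sub_sub_sum_barnesShiftTerm_le (N : ℕ) {z x : ℝ} (hz : 0 < z) (hx : 0 ≤ x)
    (hxz : x ≤ z / 2) :
    |logBarnes (N + 2) (z - x) - logBarnes (N + 2) z - ∑ q ∈ range (N + 2), barnesShiftTerm q z x|
      ≤ ∑ k ∈ range (N + 2 + 1), |centralCoeff k| *
        ((N + k).factorial * (2 / z) ^ (N + k + 1) * x ^ (N + 3 - k)) := by
  rw [sum_barnesShiftTerm, logBarnes, logBarnes, ← sum_sub_distrib, ← sum_sub_distrib]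
  refine (abs_sum_le_sum_abs _ _).trans (sum_le_sum fun k hk => ?_)
  have hk : k < N + 2 + 1 := mem_range.mp hk
  have hz₂ : 0 < z / 2 := half_pos hz
  have htaylor := norm_sub_taylor_sum_le_of_hasDerivWithinAt (f := fun r => logTower (2 * k + r))
    (Set.ordConnected_Ici (a := z / 2)) (z := z) (by simp; linarith) (y := z - x)
    (by simp; linarith) (N + 2 - k + 1)
    (fun r _ => hasDerivWithinAt_logTower_Ici hz₂ (2 * k + r)) fun w hw => by
      rw [show 2 * k + (N + 2 - k + 1) = N + k + 3 by lia]
      exact abs_logTower_add_three_le (N + k) hz₂ hw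
  rw [sub_sub_cancel_left, sum_range_succ', abs_neg, abs_of_nonneg hx,
    show N + 2 - k + 1 = N + 3 - k by lia] at htaylor
  rw [← mul_sum, ← mul_sub, ← mul_sub, abs_mul, sub_sub, add_comm]
  gcongr
  rw [← inv_div z 2, inv_pow, ← div_eq_mul_inv]
  simpa using htaylor

theorem exists_abs_logBarnes_sub_sub_sum_barnesShiftTerm_le (N : ℕ) (D p : ℝ) :
    ∃ C : ℝ, ∀ n z : ℝ, 0 < n → 0 < z → n ≤ D * z → 0 ≤ p → p / n ≤ z / 2 →
      |logBarnes (N + 2) (z - p / n) - logBarnes (N + 2) z -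
        ∑ q ∈ range (N + 2), barnesShiftTerm q z (p / n)| ≤ C / n ^ (2 * N + 4) := by
  refine ⟨∑ k ∈ range (N + 2 + 1), |centralCoeff k| *
    ((N + k).factorial * (2 * D) ^ (N + k + 1) * p ^ (N + 3 - k)), fun n z hn hz hD hp hpz => ?_⟩
  refine (abs_logBarnes_sub_sub_sum_barnesShiftTerm_le N hz (by positivity) hpz).trans ?_
  rw [sum_div]
  refine sum_le_sum fun k hk => ?_
  have hk : k < N + 2 + 1 := mem_range.mp hk
  have hDn : 2 / z ≤ 2 * D / n := by
    rw [div_le_div_iff₀ hz hn]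
    linarith
  calc _ ≤ |centralCoeff k| *
        ((N + k).factorial * (2 * D / n) ^ (N + k + 1) * (p / n) ^ (N + 3 - k)) := by gcongr
    _ = _ := by
        rw [show 2 * N + 4 = (N + k + 1) + (N + 3 - k) by lia, pow_add n, div_pow, div_pow]
        field_simp

end BarnesShift

section Coefficients

/-- The polynomial in `d = n / z` for which `-barnesShiftPoly q p d` is the coefficient of
`n ^ (-2 (q + 2))` in `barnesShiftTerm (q + 2) z (p / n)`. -/
noncomputable def barnesShiftPoly (q : ℕ) (p d : ℝ) : ℝ :=
  ∑ k ∈ range (q + 3), centralCoeff k *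
    ((k + q).factorial / (q + 3 - k).factorial * p ^ (q + 3 - k) * d ^ (k + q + 1))

theorem barnesShiftTerm_add_two (q : ℕ) {n z : ℝ} (hn : n ≠ 0) (p : ℝ) :
    barnesShiftTerm (q + 2) z (p / n) = -barnesShiftPoly q p (n / z) / n ^ (2 * (q + 2)) := by
  rw [barnesShiftTerm, barnesShiftPoly, ← sum_neg_distrib, sum_div]
  refine sum_congr rfl fun k hk => ?_
  have hk : k < q + 3 := mem_range.mp hk
  have hsign : (-1 : ℝ) ^ (q + 3 - k) * (-1) ^ (k + q) = -1 := by
    rw [← pow_add, show q + 3 - k + (k + q) = 2 * (q + 1) + 1 by lia]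
    exact Odd.neg_one_pow ⟨q + 1, rfl⟩
  rw [show k + (q + 2) + 1 = k + q + 3 by lia, show q + 2 + 1 - k = q + 3 - k by lia,
    show 2 * (q + 2) = (k + q + 1) + (q + 3 - k) by lia, pow_add, neg_pow, div_pow, div_pow]
  simp only [logTower]
  field_simp
  linear_combination (centralCoeff k * p ^ (q + 3 - k) * n ^ (q + 3 - k) * n ^ (k + q + 1) *
    z⁻¹ ^ (k + q + 1)) * hsign

theorem risingFactorial_succ_mul_factorial (l s : ℕ) :
    risingFactorial (l + 1) s * l.factorial = (l + s).factorial := by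
  induction s with
  | zero => simp [risingFactorial]
  | succ s ih =>
    rw [risingFactorial, prod_range_succ, ← risingFactorial, ← add_assoc l s 1, Nat.factorial_succ]
    push_cast
    rw [← ih]
    ring

theorem centralCoeff_add_two_mul_factorial (i s : ℕ) :
    centralCoeff (i + 2) * (2 * i + 1 + s).factorial =
      -(bernoulli (2 * i + 4) * risingFactorial (2 * i + 2) s / (4 * (i + 1) * (i + 2))) := by
  rw [← risingFactorial_succ_mul_factorial, centralCoeff,
    show 2 * (i + 2) = 2 * i + 1 + 1 + 1 + 1 by ring, Nat.factorial_succ, Nat.factorial_succ,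
    Nat.factorial_succ]
  push_cast
  field_simp
  ring

theorem Acoef_bernoulli_sum_eq (q p : ℕ) (c : ℝ) :
    ∑ j ∈ Finset.Icc 1 (q + 1), (bernoulli (2 * j + 2) : ℝ) * c ^ (2 * j) *
        risingFactorial (2 * j) (q + 2 - j) * (p * c) ^ (q + 2 - j) /
        (4 * j * (j + 1) * (Nat.factorial (q + 2 - j))) *
        (1 - (1 - c) ^ (-(j : ℤ) - (q + 2 : ℤ))) =
      ∑ k ∈ range (q + 1), centralCoeff (k + 2) * ((k + 2 + q).factorial / (q + 1 - k).factorial *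
        p ^ (q + 1 - k) * (c / (1 - c)) ^ (k + q + 3)) -
      ∑ k ∈ range (q + 1), centralCoeff (k + 2) * ((k + 2 + q).factorial / (q + 1 - k).factorial *
        p ^ (q + 1 - k) * c ^ (k + q + 3)) := by
  rw [show Finset.Icc 1 (q + 1) = Finset.Ico 1 (q + 2) from rfl, sum_Ico_eq_sum_range,
    ← sum_sub_distrib]
  refine sum_congr rfl fun i hi => ?_
  obtain ⟨s, hs⟩ : ∃ s, q + 1 = i + s := Nat.exists_eq_add_of_le (by grind)
  have hcoeff := centralCoeff_add_two_mul_factorial i s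
  have hzpow : (1 - c) ^ (-((1 + i : ℕ) : ℤ) - ((q : ℤ) + 2)) = ((1 - c) ^ (i + q + 3))⁻¹ := by
    rw [← zpow_natCast, ← zpow_neg]
    congr 1
    push_cast
    ring
  rw [hzpow, show q + 1 - i = s by lia, show i + 2 + q = 2 * i + 1 + s by lia,
    show i + q + 3 = 2 * i + 2 + s by lia, show q + 2 - (1 + i) = s by lia,
    show 2 * (1 + i) = 2 * i + 2 by ring]
  rw [← mul_sub, ← mul_sub,
    show ∀ a b c d e : ℝ, a * (b / c * d * e) = a * b * (d * e / c) by intros; ring,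
    hcoeff, div_pow, div_eq_mul_inv (c ^ _)]
  push_cast
  generalize ((1 - c) ^ (2 * i + 2 + s))⁻¹ = w
  rw [show 2 * i + 2 + 2 = 2 * i + 4 by ring, add_comm 1 (i : ℝ), add_assoc (i : ℝ),
    one_add_one_eq_two]
  field_simp
  ring

theorem barnesShiftPoly_eq (q : ℕ) (p d : ℝ) :
    barnesShiftPoly q p d = p ^ (q + 3) * d ^ (q + 1) / ((q + 1) * (q + 2) * (q + 3)) -
      p ^ (q + 2) * d ^ (q + 2) / (12 * (q + 2)) + ∑ k ∈ range (q + 1), centralCoeff (k + 2) *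
        ((k + 2 + q).factorial / (q + 1 - k).factorial * p ^ (q + 1 - k) * d ^ (k + q + 3)) := by
  have hindex (k : ℕ) : k + 1 + 1 + q + 1 = k + q + 3 := by ring
  rw [barnesShiftPoly, sum_range_succ', sum_range_succ', centralCoeff_zero, zero_add,
    centralCoeff_one, Nat.sub_zero, show q + 3 - 1 = q + 2 by lia, show 1 + q = q + 1 by ring,
    zero_add, Nat.factorial_succ (q + 2), Nat.factorial_succ (q + 1), Nat.factorial_succ q]
  simp only [hindex]
  push_cast
  field_simp
  ring

theorem Acoef_add_two (q p : ℕ) {c : ℝ} (hc₀ : c ≠ 0) (hc₁ : 1 - c ≠ 0) :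
    Acoef p c (q + 2) + c ^ (q + 2) / (q + 2 : ℕ) * ∑ j ∈ Finset.Icc 1 p, (j : ℝ) ^ (q + 2) =
      barnesShiftPoly q p (c / (1 - c)) - barnesShiftPoly q p c := by
  rw [Acoef, Acoef_bernoulli_sum_eq, barnesShiftPoly_eq, barnesShiftPoly_eq]
  push_cast
  rw [show ((q : ℝ) + 2) ^ 2 - 1 = (q + 1) * (q + 3) by ring, div_pow, div_pow, mul_pow]
  field_simp
  ring

theorem barnesShiftTerm_zero (z x : ℝ) : barnesShiftTerm 0 z x = -x * (z * Real.log z - z) := by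
  simp [barnesShiftTerm, centralCoeff_zero, logTower]

theorem barnesShiftTerm_one (z x : ℝ) :
    barnesShiftTerm 1 z x = x ^ 2 / 2 * Real.log z + x / (12 * z) := by
  simp [barnesShiftTerm, sum_range_succ, centralCoeff_zero, centralCoeff_one, logTower]
  field_simp

theorem barnesShiftTerm_zero_sub (p : ℕ) {n m : ℝ} (hn : 0 < n) (hnm : n < m) :
    barnesShiftTerm 0 m (p / n) - barnesShiftTerm 0 (m - n) (p / n) =
      Acoef p (n / m) 0 - p * Real.log m := by
  have hm : 0 < m := hn.trans hnm
  rw [barnesShiftTerm_zero, barnesShiftTerm_zero, Acoef, one_sub_div hm.ne',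
    Real.log_div (sub_pos.mpr hnm).ne' hm.ne']
  field_simp
  ring

theorem barnesShiftTerm_one_sub (p : ℕ) {n m : ℝ} (hn : 0 < n) (hnm : n < m) :
    barnesShiftTerm 1 m (p / n) - barnesShiftTerm 1 (m - n) (p / n) =
      (Acoef p (n / m) 1 + n / m * ∑ j ∈ Finset.Icc 1 p, (j : ℝ)) / n ^ 2 := by
  have hm : 0 < m := hn.trans hnm
  have hsub : m - n ≠ 0 := (sub_pos.mpr hnm).ne'
  have hsub' : n - m ≠ 0 := (sub_neg.mpr hnm).ne
  have hsum : ∑ j ∈ Finset.Icc 1 p, (j : ℝ) = p * (p + 1) / 2 := by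
    induction p with
    | zero => simp
    | succ p ih =>
      rw [sum_Icc_succ_top (by lia), ih]
      push_cast
      ring
  rw [barnesShiftTerm_one, barnesShiftTerm_one, Acoef, hsum, one_sub_div hm.ne',
    Real.log_div hsub hm.ne', div_sub_one hm.ne']
  field_simp
  ring

theorem barnesShiftTerm_succ_sub (q p : ℕ) {n m : ℝ} (hn : 0 < n) (hnm : n < m) :
    barnesShiftTerm (q + 1) m (p / n) - barnesShiftTerm (q + 1) (m - n) (p / n) =
      (Acoef p (n / m) (q + 1) + (n / m) ^ (q + 1) / (q + 1 : ℕ) *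
        ∑ j ∈ Finset.Icc 1 p, (j : ℝ) ^ (q + 1)) / n ^ (2 * (q + 1)) := by
  have hm : 0 < m := hn.trans hnm
  cases q with
  | zero => simpa using barnesShiftTerm_one_sub p hn hnm
  | succ q =>
    have hone_sub : 1 - n / m = (m - n) / m := one_sub_div hm.ne'
    rw [barnesShiftTerm_add_two q hn.ne', barnesShiftTerm_add_two q hn.ne',
      Acoef_add_two q p (div_pos hn hm).ne' (hone_sub ▸ (div_pos (sub_pos.mpr hnm) hm).ne'),
      hone_sub, div_div_div_cancel_right₀ hm.ne']
    ring

theorem exists_abs_barnesShiftTerm_one_sub_le (p D : ℝ) :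
    ∃ C : ℝ, ∀ n m : ℝ, 0 < n → n < m → n ≤ D * (m - n) →
      |barnesShiftTerm 1 m (p / n) - barnesShiftTerm 1 (m - n) (p / n)| ≤ C / n ^ 2 := by
  refine ⟨|p ^ 2 / 2| * D + |-p / 12| * D, fun n m hn hnm hD => ?_⟩
  have hm : 0 < m := hn.trans hnm
  have hsub : 0 < m - n := sub_pos.mpr hnm
  have hlog_nonneg : 0 ≤ Real.log (m / (m - n)) :=
    Real.log_nonneg <| (one_le_div hsub).mpr <| by linarith
  have hlog_le : Real.log (m / (m - n)) ≤ D := calc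
    Real.log (m / (m - n)) ≤ m / (m - n) - 1 := Real.log_le_sub_one_of_pos (div_pos hm hsub)
    _ = n / (m - n) := by field_simp; ring
    _ ≤ D := (div_le_iff₀ hsub).mpr hD
  have hinv : n / (m * (m - n)) * n ≤ D := by
    rw [← mul_div_right_comm, div_le_iff₀ (mul_pos hm hsub)]
    nlinarith
  have hdiff : barnesShiftTerm 1 m (p / n) - barnesShiftTerm 1 (m - n) (p / n) =
      (p ^ 2 / 2 * Real.log (m / (m - n)) + -p / 12 * (n / (m * (m - n)) * n)) / n ^ 2 := by
    rw [barnesShiftTerm_one, barnesShiftTerm_one, Real.log_div hm.ne' hsub.ne']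
    field_simp
    ring
  rw [hdiff, abs_div, abs_of_pos (pow_pos hn 2)]
  gcongr
  refine (abs_add_le _ _).trans ?_
  rw [abs_mul, abs_mul, abs_of_nonneg hlog_nonneg,
    abs_of_nonneg (by positivity : 0 ≤ n / (m * (m - n)) * n)]
  gcongr

theorem exists_abs_barnesShiftTerm_add_two_sub_le (q : ℕ) (p D : ℝ) :
    ∃ C : ℝ, ∀ n m : ℝ, 0 < n → n < m → n ≤ D * (m - n) →
      |barnesShiftTerm (q + 2) m (p / n) - barnesShiftTerm (q + 2) (m - n) (p / n)| ≤
        C / n ^ (2 * (q + 2)) := by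
  have hcont : Continuous (barnesShiftPoly q p) := by unfold barnesShiftPoly; fun_prop
  obtain ⟨C, hC⟩ :=
    (isCompact_Icc (a := 0) (b := D)).exists_bound_of_continuousOn hcont.continuousOn
  refine ⟨C + C, fun n m hn hnm hD => ?_⟩
  have hsub : 0 < m - n := sub_pos.mpr hnm
  have hratio : n / (m - n) ≤ D := (div_le_iff₀ hsub).mpr hD
  have hratio' : n / m ≤ n / (m - n) := by gcongr; linarith
  have hm : 0 < m := hn.trans hnm
  rw [barnesShiftTerm_add_two q hn.ne', barnesShiftTerm_add_two q hn.ne', ← sub_div, abs_div,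
    abs_of_pos (pow_pos hn _), neg_sub_neg]
  gcongr
  exact (abs_sub _ _).trans <| add_le_add (hC _ ⟨by positivity, hratio⟩)
    (hC _ ⟨by positivity, hratio'.trans hratio⟩)

theorem exists_abs_barnesShiftTerm_succ_sub_le (q : ℕ) (p D : ℝ) :
    ∃ C : ℝ, ∀ n m : ℝ, 0 < n → n < m → n ≤ D * (m - n) →
      |barnesShiftTerm (q + 1) m (p / n) - barnesShiftTerm (q + 1) (m - n) (p / n)| ≤
        C / n ^ (2 * (q + 1)) := by
  cases q with
  | zero => exact exists_abs_barnesShiftTerm_one_sub_le p D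
  | succ q => exact exists_abs_barnesShiftTerm_add_two_sub_le q p D

end Coefficients

section LogMu0

theorem abs_log_sub_sub_log_add_sum_le (N : ℕ) {X y : ℝ} (hX : 0 < X) (hy : 0 ≤ y)
    (hyX : y ≤ X / 2) :
    |Real.log (X - y) - Real.log X + ∑ q ∈ range N, y ^ (q + 1) / ((q + 1) * X ^ (q + 1))| ≤
      2 * y ^ (N + 1) / X ^ (N + 1) := by
  have hratio : y / X ≤ 1 / 2 := by
    rw [div_le_div_iff₀ hX two_pos]
    linarith
  have hlog : Real.log (X - y) - Real.log X = Real.log (1 - y / X) := by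
    rw [← Real.log_div (by linarith) hX.ne', one_sub_div hX.ne']
  have hsum : ∑ q ∈ range N, y ^ (q + 1) / ((q + 1) * X ^ (q + 1)) =
      ∑ q ∈ range N, (y / X) ^ (q + 1) / (q + 1) := by
    simp only [div_pow, div_div, mul_comm]
  have habs : |y / X| = y / X := abs_of_nonneg (by positivity)
  rw [hlog, hsum, add_comm]
  calc _ ≤ |y / X| ^ (N + 1) / (1 - |y / X|) :=
        Real.abs_log_sub_add_sum_range_le (by linarith) N
    _ ≤ (y / X) ^ (N + 1) / (1 / 2) := by
        rw [habs]
        gcongr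
        linarith
    _ = 2 * y ^ (N + 1) / X ^ (N + 1) := by
        rw [div_pow]
        ring

theorem logGamma_sub_logGamma_sub_natCast (p : ℕ) {X : ℝ} (hX : p < X) :
    Real.log (Real.Gamma X) - Real.log (Real.Gamma (X - p)) =
      ∑ j ∈ Finset.Icc 1 p, Real.log (X - j) := by
  induction p with
  | zero => simp
  | succ p ih =>
    push_cast at hX ⊢
    have hstep := logGamma_add_one (y := X - (p + 1)) (by linarith)
    rw [show X - (p + 1) + 1 = X - p by ring] at hstep
    rw [sum_Icc_succ_top (by lia), ← ih (by linarith), hstep]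
    push_cast
    ring

theorem abs_logGamma_sub_logGamma_sub_natCast_sub_le (N p : ℕ) {X : ℝ} (hX : 0 < X)
    (hpX : p ≤ X / 2) :
    |Real.log (Real.Gamma X) - Real.log (Real.Gamma (X - p)) - p * Real.log X +
        ∑ q ∈ range N, (∑ j ∈ Finset.Icc 1 p, (j : ℝ) ^ (q + 1)) / ((q + 1) * X ^ (q + 1))| ≤
      (∑ j ∈ Finset.Icc 1 p, 2 * (j : ℝ) ^ (N + 1)) / X ^ (N + 1) := by
  have hterms : Real.log (Real.Gamma X) - Real.log (Real.Gamma (X - p)) - p * Real.log X +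
      ∑ q ∈ range N, (∑ j ∈ Finset.Icc 1 p, (j : ℝ) ^ (q + 1)) / ((q + 1) * X ^ (q + 1)) =
      ∑ j ∈ Finset.Icc 1 p, (Real.log (X - j) - Real.log X +
        ∑ q ∈ range N, (j : ℝ) ^ (q + 1) / ((q + 1) * X ^ (q + 1))) := by
    simp only [sum_add_distrib, sum_sub_distrib, sum_div]
    rw [logGamma_sub_logGamma_sub_natCast p (by linarith), sum_comm, sum_const, Nat.card_Icc,
      nsmul_eq_mul, Nat.add_sub_cancel]
  rw [hterms, sum_div]
  refine (abs_sum_le_sum_abs _ _).trans <| sum_le_sum fun j hj => ?_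
  have hjp : (j : ℝ) ≤ p := by exact_mod_cast (mem_Icc.mp hj).2
  exact abs_log_sub_sub_log_add_sum_le N hX j.cast_nonneg (hjp.trans hpX)

theorem exists_abs_sum_logGamma_sub_sum_range_add_two_barnesShiftTerm_le (N p : ℕ) (D : ℝ) :
    ∃ C : ℝ, ∀ (n : ℕ) (m : ℝ), p < n → n + 2 ≤ m → n ≤ D * (m - n) →
      |∑ j ∈ range n, (Real.log (Real.Gamma (m - n + 1 - p / n + j)) -
          Real.log (Real.Gamma (m - n + 1 + j))) -
        ∑ q ∈ range (N + 2), (barnesShiftTerm q m (p / n) - barnesShiftTerm q (m - n) (p / n))| ≤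
      C / n ^ (2 * N + 4) := by
  obtain ⟨C₁, hC₁_nonneg, hC₁⟩ := exists_abs_sum_logGamma_sub_logGamma_sub_le (N + 2)
  obtain ⟨C₂, hC₂⟩ := exists_abs_logBarnes_sub_sub_sum_barnesShiftTerm_le N D p
  refine ⟨C₁ * D ^ (2 * N + 5) + C₂ + C₂, fun n m hpn hnm hD => ?_⟩
  have hn : (0 : ℝ) < n := by exact_mod_cast p.zero_le.trans_lt hpn
  have hx : (p : ℝ) / n ≤ 1 := (div_le_one hn).mpr (by exact_mod_cast hpn.le)
  have hsub : 0 < m - n := by linarith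
  have hD_pos : 0 < D := pos_of_mul_pos_left (hn.trans_le hD) hsub.le
  have hsum := hC₁ n (m - n) (p / n) (by linarith) hx
  have hshift := hC₂ n m hn (by linarith) (by nlinarith) p.cast_nonneg (by linarith)
  have hshift_sub := hC₂ n (m - n) hn hsub hD p.cast_nonneg (by linarith)
  have hpow : C₁ * n / (m - n) ^ (2 * (N + 2) + 1) ≤ C₁ * D ^ (2 * N + 5) / n ^ (2 * N + 4) := by
    have hpow_le : (n : ℝ) ^ (2 * N + 5) ≤ D ^ (2 * N + 5) * (m - n) ^ (2 * N + 5) := by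
      rw [← mul_pow]
      gcongr
    rw [div_le_div_iff₀ (by positivity) (by positivity)]
    calc C₁ * n * n ^ (2 * N + 4) = C₁ * n ^ (2 * N + 5) := by ring
      _ ≤ C₁ * (D ^ (2 * N + 5) * (m - n) ^ (2 * N + 5)) := by gcongr
      _ = C₁ * D ^ (2 * N + 5) * (m - n) ^ (2 * (N + 2) + 1) := by ring
  rw [sub_add_cancel] at hsum
  rw [sum_sub_distrib (barnesShiftTerm · m _), add_div, add_div]
  rw [abs_le] at *
  constructor <;> linarith

theorem exists_abs_sum_logGamma_sub_sum_range_add_one_barnesShiftTerm_le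
    (N p : ℕ) (D : ℝ) :
    ∃ C : ℝ, ∀ (n : ℕ) (m : ℝ), p < n → n + 2 ≤ m → n ≤ D * (m - n) →
      |∑ j ∈ range n, (Real.log (Real.Gamma (m - n + 1 - p / n + j)) -
          Real.log (Real.Gamma (m - n + 1 + j))) -
        ∑ q ∈ range (N + 1), (barnesShiftTerm q m (p / n) - barnesShiftTerm q (m - n) (p / n))| ≤
      C / n ^ (2 * (N + 1)) := by
  obtain ⟨C₁, hC₁⟩ := exists_abs_sum_logGamma_sub_sum_range_add_two_barnesShiftTerm_le N p D
  obtain ⟨C₂, hC₂⟩ := exists_abs_barnesShiftTerm_succ_sub_le N p D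
  refine ⟨|C₁| + C₂, fun n m hpn hnm hD => ?_⟩
  have hn : (1 : ℝ) ≤ n := by exact_mod_cast p.zero_le.trans_lt hpn
  have hsum := hC₁ n m hpn hnm hD
  have hlast := hC₂ n m (by linarith) (by linarith) hD
  have hpow : C₁ / (n : ℝ) ^ (2 * N + 4) ≤ |C₁| / n ^ (2 * (N + 1)) := by
    gcongr
    · exact le_abs_self C₁
    · lia
  rw [sum_range_succ _ (N + 1)] at hsum
  rw [add_div]
  rw [abs_le] at *
  constructor <;> linarith

theorem sum_barnesShiftTerm_sub (N p : ℕ) {n m : ℝ} (hn : 0 < n) (hnm : n < m) :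
    ∑ q ∈ range (N + 1), (barnesShiftTerm q m (p / n) - barnesShiftTerm q (m - n) (p / n)) =
      ∑ q ∈ range (N + 1), Acoef p (n / m) q / n ^ (2 * q) - p * Real.log m +
        ∑ q ∈ range N, (∑ j ∈ Finset.Icc 1 p, (j : ℝ) ^ (q + 1)) /
          ((q + 1) * (m * n) ^ (q + 1)) := by
  have hm : 0 < m := hn.trans hnm
  have hpow (q : ℕ) : (n / m) ^ (q + 1) / (q + 1 : ℕ) *
      (∑ j ∈ Finset.Icc 1 p, (j : ℝ) ^ (q + 1)) / n ^ (2 * (q + 1)) =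
      (∑ j ∈ Finset.Icc 1 p, (j : ℝ) ^ (q + 1)) / ((q + 1) * (m * n) ^ (q + 1)) := by
    rw [two_mul, pow_add, div_pow, mul_pow]
    push_cast
    field_simp
    ring
  rw [sum_range_succ', sum_range_succ' _ N, barnesShiftTerm_zero_sub p hn hnm]
  simp only [barnesShiftTerm_succ_sub _ p hn hnm, add_div, hpow, sum_add_distrib, mul_zero,
    pow_zero, div_one]
  ring

theorem mu0_pos {p n m : ℕ} (hpn : p < n) (hnm : n ≤ m) : 0 < mu0 p n m := by
  have hn : (0 : ℝ) < n := by exact_mod_cast p.zero_le.trans_lt hpn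
  have hx : (p : ℝ) / n < 1 := (div_lt_one hn).mpr (by exact_mod_cast hpn)
  have hnm' : (n : ℝ) ≤ m := by exact_mod_cast hnm
  have hpmn : (p : ℝ) < m * n := by
    exact_mod_cast hpn.trans_le (Nat.le_mul_of_pos_left n (by lia))
  refine mul_pos (div_pos ?_ (mul_pos (pow_pos hn p) ?_)) (prod_pos fun j _ => div_pos ?_ ?_) <;>
    refine Real.Gamma_pos_of_pos ?_
  · exact p.cast_nonneg.trans_lt hpmn
  · linarith
  · linarith [j.cast_nonneg (α := ℝ)]
  · linarith [j.cast_nonneg (α := ℝ)]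

theorem log_mu0 {p n m : ℕ} (hpn : p < n) (hnm : n ≤ m) :
    Real.log (mu0 p n m) =
      Real.log (Real.Gamma (m * n)) - Real.log (Real.Gamma (m * n - p)) - p * Real.log n +
        ∑ j ∈ range n, (Real.log (Real.Gamma (m - n + 1 - p / n + j)) -
          Real.log (Real.Gamma (m - n + 1 + j))) := by
  have hne := (mu0_pos hpn hnm).ne'
  rw [mu0] at hne ⊢
  obtain ⟨⟨hΓ, hpow, hΓp⟩, hprod⟩ : (_ ∧ _ ∧ _) ∧ _ := by
    simpa only [mul_ne_zero_iff, div_ne_zero_iff] using hne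
  have hfactor := prod_ne_zero_iff.mp hprod
  rw [Real.log_mul (div_ne_zero hΓ (mul_ne_zero hpow hΓp)) hprod,
    Real.log_div hΓ (mul_ne_zero hpow hΓp), Real.log_mul hpow hΓp, Real.log_pow,
    Real.log_prod hfactor, sum_congr rfl fun j hj => Real.log_div
      (div_ne_zero_iff.mp (hfactor j hj)).1 (div_ne_zero_iff.mp (hfactor j hj)).2]
  ring

end LogMu0

theorem log_mu0_asymptotic_expansion_general (p N : ℕ) (D : ℝ) :
    ∃ C : ℝ, 0 < C ∧ ∀ n m : ℕ, p < n → n + 2 ≤ m → (n : ℝ) ≤ D * (m - n) →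
      p < n * (m - n + 1) ∧ 0 < mu0 p n m ∧
      |Real.log (mu0 p n m) - ∑ q ∈ range (N + 1), Acoef p (n / m) q / n ^ (2 * q)| ≤
        C / n ^ (2 * (N + 1)) := by
  obtain ⟨C₁, hC₁⟩ :=
    exists_abs_sum_logGamma_sub_sum_range_add_one_barnesShiftTerm_le N p D
  set C₂ : ℝ := ∑ j ∈ Finset.Icc 1 p, 2 * (j : ℝ) ^ (N + 1)
  refine ⟨|C₁| + C₂ + 1, by positivity, fun n m hpn hnm hD => ⟨?_, mu0_pos hpn (by lia), ?_⟩⟩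
  · exact hpn.trans_le (Nat.le_mul_of_pos_right n (by lia))
  have hn : (0 : ℝ) < n := by exact_mod_cast p.zero_le.trans_lt hpn
  have hpn' : (p : ℝ) ≤ n := by exact_mod_cast hpn.le
  have hnm' : (n : ℝ) + 2 ≤ m := by exact_mod_cast hnm
  have hm : (0 : ℝ) < m := by linarith
  have hgamma := hC₁ n m hpn hnm' hD
  have hratio := abs_logGamma_sub_logGamma_sub_natCast_sub_le N p (mul_pos hm hn) (by nlinarith)
  have hpow : C₂ / ((m : ℝ) * n) ^ (N + 1) ≤ C₂ / n ^ (2 * (N + 1)) := by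
    rw [pow_mul, sq]
    gcongr
    linarith
  rw [sum_barnesShiftTerm_sub N p hn (by linarith)] at hgamma
  rw [Real.log_mul hm.ne' hn.ne'] at hratio
  rw [log_mu0 hpn (by lia)]
  calc _ ≤ C₁ / n ^ (2 * (N + 1)) + C₂ / (m * n) ^ (N + 1) := by
        rw [abs_le] at *
        constructor <;> linarith
    _ ≤ |C₁| / n ^ (2 * (N + 1)) + C₂ / n ^ (2 * (N + 1)) := by
        gcongr
        exact le_abs_self C₁
    _ ≤ (|C₁| + C₂ + 1) / n ^ (2 * (N + 1)) := by
        rw [← add_div]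
        gcongr ?_ / _
        linarith

/-- truncated asymptotic expansion of `ln μ0(p,n,m)` in inverse even powers
of `n`, along the sequence `n = a·t`, `m = b·t` with `c = a/b ∈ (0,1)`. -/
theorem log_mu0_asymptotic_expansion (p : ℕ) (hp : 0 < p) (a b : ℕ) (ha : 0 < a)
    (hab : a < b) (N : ℕ) :
    ∃ C : ℝ, 0 < C ∧ ∃ T : ℕ, 0 < T ∧ ∀ t : ℕ, T ≤ t →
      p < (a * t) * ((b * t) - (a * t) + 1) ∧ 0 < mu0 p (a * t) (b * t) ∧
      |Real.log (mu0 p (a * t) (b * t)) -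
          ∑ q ∈ Finset.range (N + 1), Acoef p ((a : ℝ) / b) q / ((a * t : ℕ) : ℝ) ^ (2 * q)|
        ≤ C / ((a * t : ℕ) : ℝ) ^ (2 * (N + 1)) := by
  obtain ⟨C, hC_pos, hC⟩ := log_mu0_asymptotic_expansion_general p N (a / (b - a))
  refine ⟨C, hC_pos, p + 2, by lia, fun t ht => ?_⟩
  have ht₀ : (t : ℝ) ≠ 0 := by
    norm_cast
    lia
  have hba : (b : ℝ) - a ≠ 0 := sub_ne_zero.mpr (by exact_mod_cast hab.ne')
  rw [← mul_div_mul_right (a : ℝ) b ht₀, ← Nat.cast_mul, ← Nat.cast_mul]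
  refine hC (a * t) (b * t) (by nlinarith) (by nlinarith) (le_of_eq ?_)
  push_cast
  field_simp
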